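/- For every oriented rectangular diagram R one has tb(R) + tb(R̄) = −c(R), where R̄ is the diagram obtained from R by rotating the plane clockwise by π/2 (with the induced orientation, and again with the convention that vertical edges overcross), and c(R) is the complexity of R. -/

import Mathlib

noncomputable section
open scoped Classical

/-- A point of the plane. -/
abbrev Pt : Type := ℝ × ℝ

/-- A rectangular diagram: a finite set of points in the plane such that every
vertical or horizontal straight line contains either no points or exactly two points of it. -/
def IsDiagram (R : Finset Pt) : Prop :=
  ∀ p ∈ R, (R.filter (fun q => q.1 = p.1)).card = 2 ∧
    (R.filter (fun q => q.2 = p.2)).card = 2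

/-- The complexity of a rectangular diagram: the number of its vertical edges. -/
def complexity (R : Finset Pt) : ℕ := (R.image Prod.fst).card

/-- Moving the vertical line `x0` to position `x1` (all other points unchanged). -/
def vmap (x0 x1 : ℝ) : Pt → Pt := fun p => if p.1 = x0 then (x1, p.2) else p

/-- Moving the horizontal line `y0` to position `y1`. -/
def hmap (y0 y1 : ℝ) : Pt → Pt := fun p => if p.2 = y0 then (p.1, y1) else p

/-- Exchanging the vertical lines `x1` and `x2`. -/
def swapv (x1 x2 : ℝ) : Pt → Pt := fun p =>
  if p.1 = x1 then (x2, p.2) else if p.1 = x2 then (x1, p.2) else p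

/-- Exchanging the horizontal lines `y1` and `y2`. -/
def swaph (y1 y2 : ℝ) : Pt → Pt := fun p =>
  if p.2 = y1 then (p.1, y2) else if p.2 = y2 then (p.1, y1) else p

/-- `f` realizes a cyclic permutation on the finite set `R`:  an extreme (left/right/top/bottom)
edge is moved to the opposite side of the diagram. -/
def CyclicData (R : Finset Pt) (f : Pt → Pt) : Prop :=
  (∃ x0 x1 : ℝ, (∃ p ∈ R, p.1 = x0) ∧
     (((∀ p ∈ R, x0 ≤ p.1) ∧ ∀ p ∈ R, p.1 ≠ x0 → p.1 < x1) ∨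
      ((∀ p ∈ R, p.1 ≤ x0) ∧ ∀ p ∈ R, p.1 ≠ x0 → x1 < p.1)) ∧
     f = vmap x0 x1) ∨
  (∃ y0 y1 : ℝ, (∃ p ∈ R, p.2 = y0) ∧
     (((∀ p ∈ R, y0 ≤ p.2) ∧ ∀ p ∈ R, p.2 ≠ y0 → p.2 < y1) ∨
      ((∀ p ∈ R, p.2 ≤ y0) ∧ ∀ p ∈ R, p.2 ≠ y0 → y1 < p.2)) ∧
     f = hmap y0 y1)

/-- The pairs of second coordinates of the points of `R` on the vertical lines `x1`, `x2`
do not interleave. -/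
def NoInterleaveV (R : Finset Pt) (x1 x2 : ℝ) : Prop :=
  ∀ p ∈ R, ∀ p' ∈ R, ∀ q ∈ R, ∀ q' ∈ R,
    p.1 = x1 → p'.1 = x1 → q.1 = x2 → q'.1 = x2 →
    ¬ ((p.2 < q.2 ∧ q.2 < p'.2 ∧ p'.2 < q'.2) ∨
       (q.2 < p.2 ∧ p.2 < q'.2 ∧ q'.2 < p'.2))

/-- The pairs of first coordinates of the points of `R` on the horizontal lines `y1`, `y2`
do not interleave. -/
def NoInterleaveH (R : Finset Pt) (y1 y2 : ℝ) : Prop :=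
  ∀ p ∈ R, ∀ p' ∈ R, ∀ q ∈ R, ∀ q' ∈ R,
    p.2 = y1 → p'.2 = y1 → q.2 = y2 → q'.2 = y2 →
    ¬ ((p.1 < q.1 ∧ q.1 < p'.1 ∧ p'.1 < q'.1) ∨
       (q.1 < p.1 ∧ p.1 < q'.1 ∧ q'.1 < p'.1))

/-- `f` realizes a commutation on `R`: two neighboring parallel edges, whose pairs of endpoints
projected to the common axis are disjoint and do not interleave, are exchanged. -/
def CommData (R : Finset Pt) (f : Pt → Pt) : Prop :=
  (∃ x1 x2 : ℝ, x1 ≠ x2 ∧ (∃ p ∈ R, p.1 = x1) ∧ (∃ p ∈ R, p.1 = x2) ∧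
     (∀ p ∈ R, ¬ (min x1 x2 < p.1 ∧ p.1 < max x1 x2)) ∧
     (∀ p ∈ R, ∀ q ∈ R, p.1 = x1 → q.1 = x2 → p.2 ≠ q.2) ∧
     NoInterleaveV R x1 x2 ∧ f = swapv x1 x2) ∨
  (∃ y1 y2 : ℝ, y1 ≠ y2 ∧ (∃ p ∈ R, p.2 = y1) ∧ (∃ p ∈ R, p.2 = y2) ∧
     (∀ p ∈ R, ¬ (min y1 y2 < p.2 ∧ p.2 < max y1 y2)) ∧
     (∀ p ∈ R, ∀ q ∈ R, p.2 = y1 → q.2 = y2 → p.1 ≠ q.1) ∧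
     NoInterleaveH R y1 y2 ∧ f = swaph y1 y2)

/-- A cyclic permutation move of rectangular diagrams. -/
def CyclicMove (R R' : Finset Pt) : Prop :=
  IsDiagram R ∧ IsDiagram R' ∧ ∃ f, CyclicData R f ∧ R' = R.image f

/-- A commutation move of rectangular diagrams. -/
def CommMove (R R' : Finset Pt) : Prop :=
  IsDiagram R ∧ IsDiagram R' ∧ ∃ f, CommData R f ∧ R' = R.image f

/-- The type of a stabilization/destabilization. -/
inductive StabType
  | I : StabType
  | II : StabType
deriving DecidableEq

/-- Result of replacing the vertex `(x, y)` by the three other vertices of the small square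
with corners `(x, y)`, `(x', y)`, `(x, y')`, `(x', y')`. -/
def stabSet (x y x' y' : ℝ) (C : Finset Pt) : Finset Pt :=
  insert ((x', y) : Pt) (insert ((x, y') : Pt) (insert ((x', y') : Pt) (C.erase (x, y))))

/-- The data of a stabilization of `R` at the vertex `(x, y)`, yielding `R'`:  the vertex is
replaced by the three other corners of a small square (`x'`, `y'` are fresh coordinates,
and no coordinate of `R` lies strictly between `x, x'` nor between `y, y'`). -/
def StabData (x y x' y' : ℝ) (R R' : Finset Pt) : Prop :=
  (x, y) ∈ R ∧ x ≠ x' ∧ y ≠ y' ∧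
  (∀ p ∈ R, p.1 ≠ x') ∧ (∀ p ∈ R, p.2 ≠ y') ∧
  (∀ p ∈ R, ¬ (min x x' < p.1 ∧ p.1 < max x x')) ∧
  (∀ p ∈ R, ¬ (min y y' < p.2 ∧ p.2 < max y y')) ∧
  R' = stabSet x y x' y' R

/-- A stabilization of type `t` occurring at the vertex `v` of `R`.  The type is I when the two
new short edges point from their common vertex downward-and-leftward or upward-and-rightward. -/
def StabMoveAt (t : StabType) (v : Pt) (R R' : Finset Pt) : Prop :=
  IsDiagram R ∧ IsDiagram R' ∧
  ∃ x' y' : ℝ, StabData v.1 v.2 x' y' R R' ∧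
    (t = StabType.I ↔ 0 < (v.1 - x') * (v.2 - y'))

/-- A stabilization of type `t`. -/
def StabMove (t : StabType) (R R' : Finset Pt) : Prop :=
  ∃ v : Pt, StabMoveAt t v R R'

/-- A complexity-preserving elementary move: a cyclic permutation or a commutation. -/
def ExchangeMove (R R' : Finset Pt) : Prop := CyclicMove R R' ∨ CommMove R R'

/-- An elementary move of rectangular diagrams: a cyclic permutation, a commutation,
a stabilization or a destabilization. -/
def ElemMove (R R' : Finset Pt) : Prop :=
  CyclicMove R R' ∨ CommMove R R' ∨ ∃ t, StabMove t R R' ∨ StabMove t R' R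

/-- An elementary move involving no stabilization or destabilization of type other than `t`. -/
def LegMove (t : StabType) (R R' : Finset Pt) : Prop :=
  CyclicMove R R' ∨ CommMove R R' ∨ StabMove t R R' ∨ StabMove t R' R

/-- Legendrian equivalence: connected by a finite sequence of elementary moves containing
no type II stabilizations or destabilizations. -/
def LegEquiv : Finset Pt → Finset Pt → Prop :=
  Relation.ReflTransGen (LegMove StabType.I)

/-- Connected by a finite sequence of elementary moves containing
no type I stabilizations or destabilizations. -/
def MirrorEquiv : Finset Pt → Finset Pt → Prop :=
  Relation.ReflTransGen (LegMove StabType.II)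

/-- An elementary simplification of type `t` : a finite sequence of cyclic permutations and
commutations followed by one destabilization of type `t`. -/
def ElemSimp (t : StabType) (R R' : Finset Pt) : Prop :=
  ∃ S, Relation.ReflTransGen ExchangeMove R S ∧ StabMove t R' S
/-- An orientation of a rectangular diagram, given by a coloring of its vertices in black
(`true`) and white (`false`):  the two vertices on a common vertical or horizontal line get
opposite colors; vertical edges are directed from the black endpoint to the white one,
horizontal edges from the white endpoint to the black one. -/
def IsOrientation (R : Finset Pt) (o : Pt → Bool) : Prop :=
  ∀ p ∈ R, ∀ q ∈ R, p ≠ q → (p.1 = q.1 ∨ p.2 = q.2) → o p ≠ o q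

/-- The writhe of an oriented rectangular diagram: the algebraic number of crossings, where
at every crossing the vertical edge is the overpass. -/
def writhe (R : Finset Pt) (o : Pt → Bool) : ℤ :=
  ∑ a ∈ R, ∑ b ∈ R, ∑ c ∈ R, ∑ d ∈ R,
    if a.1 = b.1 ∧ o a = true ∧ o b = false ∧
       c.2 = d.2 ∧ o c = false ∧ o d = true ∧
       min c.1 d.1 < a.1 ∧ a.1 < max c.1 d.1 ∧
       min a.2 b.2 < c.2 ∧ c.2 < max a.2 b.2 then
      -((if a.2 < b.2 then (1 : ℤ) else -1) * (if c.1 < d.1 then (1 : ℤ) else -1))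
    else 0

/-- The number of cusps of the associated Legendrian front: the number of vertices of `R` at
which the incident vertical edge goes upward and the incident horizontal edge goes leftward,
or the vertical edge goes downward and the horizontal edge goes rightward. -/
def cusps (R : Finset Pt) : ℕ :=
  (R.filter (fun p => ∃ q ∈ R, ∃ r ∈ R, q ≠ p ∧ q.1 = p.1 ∧ r ≠ p ∧ r.2 = p.2 ∧
     ((p.2 < q.2 ∧ r.1 < p.1) ∨ (q.2 < p.2 ∧ p.1 < r.1)))).card

/-- The Thurston–Bennequin number of an oriented rectangular diagram. -/
def tb (R : Finset Pt) (o : Pt → Bool) : ℚ :=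
  (writhe R o : ℚ) - (cusps R : ℚ) / 2
theorem rot_inj : Function.Injective (fun p : Pt => ((p.2, -p.1) : Pt)) := by
  rintro ⟨a, b⟩ ⟨c, d⟩ h
  simp only [Prod.mk.injEq, neg_inj] at h
  exact Prod.ext h.2 h.1

theorem partner_of_card (R : Finset Pt) (f : Pt → ℝ) (p : Pt) (hp : p ∈ R)
    (h : (R.filter (fun q => f q = f p)).card = 2) :
    ∃ q ∈ R, q ≠ p ∧ f q = f p ∧ ∀ q' ∈ R, q' ≠ p → f q' = f p → q' = q := by
  obtain ⟨x, y, hxy, he⟩ := Finset.card_eq_two.mp h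
  have key : ∀ z, (z ∈ R ∧ f z = f p) ↔ (z = x ∨ z = y) := by
    intro z
    have := Finset.ext_iff.mp he z
    simpa using this
  have hx := (key x).2 (Or.inl rfl)
  have hy := (key y).2 (Or.inr rfl)
  rcases (key p).1 ⟨hp, rfl⟩ with h1 | h1
  · refine ⟨y, hy.1, fun e => hxy (by rw [← h1, e]), hy.2, fun q' hq hne hf => ?_⟩
    rcases (key q').1 ⟨hq, hf⟩ with h2 | h2
    · exact absurd (h2.trans h1.symm) hne
    · exact h2
  · refine ⟨x, hx.1, fun e => hxy (by rw [e, ← h1]), hx.2, fun q' hq hne hf => ?_⟩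
    rcases (key q').1 ⟨hq, hf⟩ with h2 | h2
    · exact h2
    · exact absurd (h2.trans h1.symm) hne

theorem writhe_rot (R : Finset Pt) (o : Pt → Bool) :
    writhe (R.image (fun p => (p.2, -p.1))) (fun p => ! o (-p.2, p.1)) = - writhe R o := by
  unfold writhe
  simp only [Finset.sum_image rot_inj.injOn]
  have hswap : ∀ F : Pt → Pt → Pt → Pt → ℤ,
      ∑ a ∈ R, ∑ b ∈ R, ∑ c ∈ R, ∑ d ∈ R, F a b c d
        = ∑ c ∈ R, ∑ d ∈ R, ∑ a ∈ R, ∑ b ∈ R, F a b c d := by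
    intro F
    have h1 := Finset.sum_comm (s := R ×ˢ R) (t := R ×ˢ R)
      (f := fun x y => F x.1 x.2 y.1 y.2)
    simpa only [Finset.sum_product] using h1
  rw [hswap]
  simp only [← Finset.sum_neg_distrib]
  refine Finset.sum_congr rfl fun a _ => Finset.sum_congr rfl fun b _ =>
    Finset.sum_congr rfl fun c _ => Finset.sum_congr rfl fun d _ => ?_
  simp only [neg_neg, Bool.not_eq_true', Bool.not_eq_false', neg_inj, min_neg_neg, max_neg_neg,
    neg_lt_neg_iff, Prod.mk.eta]
  by_cases h : a.1 = b.1 ∧ o a = true ∧ o b = false ∧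
       c.2 = d.2 ∧ o c = false ∧ o d = true ∧
       min c.1 d.1 < a.1 ∧ a.1 < max c.1 d.1 ∧
       min a.2 b.2 < c.2 ∧ c.2 < max a.2 b.2
  · rw [if_pos h, if_pos (by tauto)]
    obtain ⟨-, -, -, -, -, -, h1, h2, -, -⟩ := h
    rcases lt_trichotomy c.1 d.1 with h3 | h3 | h3
    · by_cases h4 : a.2 < b.2 <;> simp [h3, h3.not_gt, h4]
    · rw [h3] at h1 h2
      simp only [min_self, max_self] at h1 h2
      exact absurd h1 h2.not_gt
    · by_cases h4 : a.2 < b.2 <;> simp [h3, h3.not_gt, h4]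
  · rw [if_neg h, if_neg (by tauto)]
    simp

theorem cusps_rot (R : Finset Pt) (hR : IsDiagram R) :
    cusps R + cusps (R.image (fun p => (p.2, -p.1))) = R.card := by
  unfold cusps
  rw [Finset.filter_image, Finset.card_image_of_injective _ rot_inj]
  rw [← Finset.card_filter_add_card_filter_not (s := R) (fun p => ∃ q ∈ R, ∃ r ∈ R, q ≠ p ∧ q.1 = p.1 ∧ r ≠ p ∧ r.2 = p.2 ∧
     ((p.2 < q.2 ∧ r.1 < p.1) ∨ (q.2 < p.2 ∧ p.1 < r.1)))]
  congr 2
  apply Finset.filter_congr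
  intro p hp
  obtain ⟨q, hq, hqp, hq1, hqu⟩ := partner_of_card R Prod.fst p hp (hR p hp).1
  obtain ⟨r, hr, hrp, hr1, hru⟩ := partner_of_card R Prod.snd p hp (hR p hp).2
  have hq2 : q.2 ≠ p.2 := fun e => hqp (Prod.ext hq1 e)
  have hr2 : r.1 ≠ p.1 := fun e => hrp (Prod.ext e hr1)
  have e1 : (∃ q ∈ R, ∃ r ∈ R, q ≠ p ∧ q.1 = p.1 ∧ r ≠ p ∧ r.2 = p.2 ∧
     ((p.2 < q.2 ∧ r.1 < p.1) ∨ (q.2 < p.2 ∧ p.1 < r.1))) ↔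
     ((p.2 < q.2 ∧ r.1 < p.1) ∨ (q.2 < p.2 ∧ p.1 < r.1)) := by
    constructor
    · rintro ⟨q', hq', r', hr', a, b, c, d, e⟩
      rwa [hqu q' hq' a b, hru r' hr' c d] at e
    · intro e
      exact ⟨q, hq, r, hr, hqp, hq1, hrp, hr1, e⟩
  rw [e1]
  constructor
  · rintro ⟨q', hq', r', hr', a, b, c, d, e⟩
    obtain ⟨q0, hq0, rfl⟩ := Finset.mem_image.1 hq'
    obtain ⟨r0, hr0, rfl⟩ := Finset.mem_image.1 hr'
    simp only [neg_inj, neg_lt_neg_iff] at b d e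
    rw [hru q0 hq0 (fun h => a (by rw [h])) b, hqu r0 hr0 (fun h => c (by rw [h])) d] at e
    rintro (⟨h1, h2⟩ | ⟨h1, h2⟩) <;> rcases e with ⟨h3, h4⟩ | ⟨h3, h4⟩ <;> linarith
  · intro h
    refine ⟨_, Finset.mem_image_of_mem _ hr, _, Finset.mem_image_of_mem _ hq,
      fun e => hrp (rot_inj e), hr1, fun e => hqp (rot_inj e), by simpa using hq1, ?_⟩
    simp only [neg_lt_neg_iff]
    rcases lt_or_gt_of_ne hq2 with h1 | h1 <;> rcases lt_or_gt_of_ne hr2 with h2 | h2 <;> tauto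

theorem card_eq_two_mul_complexity (R : Finset Pt) (hR : IsDiagram R) :
    R.card = complexity R * 2 := by
  unfold complexity
  rw [Finset.card_eq_sum_card_image Prod.fst R]
  refine Finset.sum_const_nat fun x hx => ?_
  obtain ⟨p, hp, rfl⟩ := Finset.mem_image.1 hx
  exact (hR p hp).1

/-- **Theorem.** For every oriented rectangular diagram `R`, one has
`tb R + tb R̄ = -c(R)`, where `R̄` is obtained from `R` by a clockwise rotation by `π/2`
(with the induced orientation) and `c(R)` is the complexity. -/
theorem tb_sum_eq_neg_complexity (R : Finset Pt) (o : Pt → Bool)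
    (hR : IsDiagram R) (ho : IsOrientation R o) :
    tb R o + tb (R.image (fun p => (p.2, -p.1)))
        (fun p => ! o (-p.2, p.1)) = -(complexity R : ℚ) := by
  have h1 := writhe_rot R o
  have h2 := cusps_rot R hR
  rw [card_eq_two_mul_complexity R hR] at h2
  unfold tb
  rw [h1]
  have h3 : (cusps R : ℚ) + (cusps (R.image (fun p => (p.2, -p.1))) : ℚ)
      = (complexity R : ℚ) * 2 := by exact_mod_cast h2
  push_cast
  linarith
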